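/- Thompson's group F admits a finite presentation with two generators and two relations: F is isomorphic to the group presented by generators a, b subject to the relations a⁻²ba² = b⁻¹a⁻¹ba b and a⁻³ba³ = b⁻¹a⁻²ba²b (i.e., b^{a·a} = b^{a·b} and b^{a·a·a} = b^{a·a·b}, where x^y := y⁻¹xy and x^{yz} := (x^y)^z), via an isomorphism sending a to x₀ and b to x₁. -/

import Mathlib

/-- The defining relations of Thompson's group `F`:
`xᵢ⁻¹ xₙ xᵢ xₙ₊₁⁻¹` for all natural numbers `i < n`. -/
def thompsonRels : Set (FreeGroup ℕ) :=
  {r | ∃ i n : ℕ, i < n ∧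
    r = (FreeGroup.of i)⁻¹ * FreeGroup.of n * FreeGroup.of i * (FreeGroup.of (n + 1))⁻¹}

/-- Thompson's group `F`. -/
abbrev ThompsonF : Type := PresentedGroup thompsonRels

/-- The image of the `n`-th generator in Thompson's group `F`. -/
def x (n : ℕ) : ThompsonF := PresentedGroup.of n

/-- Conjugation `u ^ v = v⁻¹ * u * v` in the free group on two generators. -/
def cnj (u v : FreeGroup (Fin 2)) : FreeGroup (Fin 2) := v⁻¹ * u * v

/-- The generator `a`. -/
def a : FreeGroup (Fin 2) := FreeGroup.of 0

/-- The generator `b`. -/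
def b : FreeGroup (Fin 2) := FreeGroup.of 1

/-- The two relations `b^{a·a} = b^{a·b}` and `b^{a·a·a} = b^{a·a·b}`, written as words
that must die in the presented group. -/
def thompsonRels₂ : Set (FreeGroup (Fin 2)) :=
  {cnj (cnj b a) a * (cnj (cnj b a) b)⁻¹,
   cnj (cnj (cnj b a) a) a * (cnj (cnj (cnj b a) a) b)⁻¹}

/-!
A sequence satisfying the relations of `F` is determined by its first two terms `s`, `t`, because
conjugation by the zeroth term shifts the later ones: `yₙ₊₂ = s⁻¹ yₙ₊₁ s`. Given this recursion, the
relation for `(i, n)` with `i ≥ 1` is conjugated by `s` to the one for `(i + 1, n + 1)`, so only the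
relations for `(1, n)` remain to be checked. Of these, `(1, 2)` and `(1, 3)` suffice: conjugating
`yₙ₊₄ = y₂⁻¹ yₙ₊₃ y₂` by `y₁` yields the relation for `(1, n + 4)` from the relations for `(1, 2)`,
`(1, n + 2)` and `(1, n + 3)`. The two remaining relations are the ones imposed on `a` and `b`.
-/

section Sequences

variable {G : Type*} [Group G] {y : ℕ → G}

/-- A sequence in a group satisfying the relations of Thompson's group `F`, that is, the image of
the generators `xₙ` under a homomorphism out of `F`. -/
def IsThompsonSequence (y : ℕ → G) : Prop :=
  ∀ ⦃i n : ℕ⦄, i < n → (y i)⁻¹ * y n * y i = y (n + 1)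

/-- The only possible Thompson sequence starting with `s` and `t`: its later terms are obtained from
`t` by repeated conjugation by `s`. -/
def thompsonSeq (s t : G) : ℕ → G
  | 0 => s
  | 1 => t
  | n + 2 => s⁻¹ * thompsonSeq s t (n + 1) * s

theorem conj_inv_mul_mul (g u v : G) :
    g⁻¹ * (u⁻¹ * v * u) * g = (g⁻¹ * u * g)⁻¹ * (g⁻¹ * v * g) * (g⁻¹ * u * g) := by
  group

theorem thompson_rel_succ_succ (h₀ : ∀ n, (y 0)⁻¹ * y (n + 1) * y 0 = y (n + 2)) {i n : ℕ}
    (h : (y (i + 1))⁻¹ * y (n + 1) * y (i + 1) = y (n + 2)) :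
    (y (i + 2))⁻¹ * y (n + 2) * y (i + 2) = y (n + 3) := by
  rw [← h₀ i, ← h₀ n, ← conj_inv_mul_mul, h, h₀]

theorem thompson_rel_one (h₀ : ∀ n, (y 0)⁻¹ * y (n + 1) * y 0 = y (n + 2))
    (h₁₂ : (y 1)⁻¹ * y 2 * y 1 = y 3) (h₁₃ : (y 1)⁻¹ * y 3 * y 1 = y 4) :
    ∀ n, (y 1)⁻¹ * y (n + 2) * y 1 = y (n + 3)
  | 0 => h₁₂
  | 1 => h₁₃
  | n + 2 => by
    have h₂ : (y 2)⁻¹ * y (n + 3) * y 2 = y (n + 4) :=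
      thompson_rel_succ_succ h₀ (thompson_rel_one h₀ h₁₂ h₁₃ n)
    have h₃ : (y 3)⁻¹ * y (n + 4) * y 3 = y (n + 5) := thompson_rel_succ_succ h₀ h₂
    calc (y 1)⁻¹ * y (n + 4) * y 1
        = (y 1)⁻¹ * ((y 2)⁻¹ * y (n + 3) * y 2) * y 1 := by rw [h₂]
      _ = (y 3)⁻¹ * y (n + 4) * y 3 := by
        rw [conj_inv_mul_mul, h₁₂, thompson_rel_one h₀ h₁₂ h₁₃ (n + 1)]
      _ = y (n + 5) := h₃

theorem isThompsonSequence_of_rel_one (h₀ : ∀ n, (y 0)⁻¹ * y (n + 1) * y 0 = y (n + 2))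
    (h₁ : ∀ n, (y 1)⁻¹ * y (n + 2) * y 1 = y (n + 3)) : IsThompsonSequence y
  | 0, n + 1, _ => h₀ n
  | 1, n + 2, _ => h₁ n
  | _ + 2, _ + 2, hin =>
    thompson_rel_succ_succ h₀ (isThompsonSequence_of_rel_one h₀ h₁ (Nat.lt_of_succ_lt_succ hin))

theorem isThompsonSequence_iff (h₀ : ∀ n, (y 0)⁻¹ * y (n + 1) * y 0 = y (n + 2)) :
    IsThompsonSequence y ↔
      (y 1)⁻¹ * y 2 * y 1 = y 3 ∧ (y 1)⁻¹ * y 3 * y 1 = y 4 :=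
  ⟨fun hy => ⟨hy (by decide), hy (by decide)⟩,
    fun h => isThompsonSequence_of_rel_one h₀ (thompson_rel_one h₀ h.1 h.2)⟩

theorem thompsonSeq_eq (h₀ : ∀ n, (y 0)⁻¹ * y (n + 1) * y 0 = y (n + 2)) :
    thompsonSeq (y 0) (y 1) = y := by
  funext n
  induction n using Nat.twoStepInduction with
  | zero => rfl
  | one => rfl
  | more n _ ih => rw [thompsonSeq, ih, h₀]

end Sequences

section Presentations

variable {G : Type*} [Group G]

theorem forall_mem_thompsonRels_map_eq_one_iff (f : FreeGroup ℕ →* G) :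
    (∀ r ∈ thompsonRels, f r = 1) ↔ IsThompsonSequence fun n => f (FreeGroup.of n) := by
  constructor
  · intro hf i n hin
    simpa only [map_mul, map_inv, mul_inv_eq_one] using hf _ ⟨i, n, hin, rfl⟩
  · rintro hf _ ⟨i, n, hin, rfl⟩
    simpa only [map_mul, map_inv, mul_inv_eq_one] using hf hin

theorem forall_mem_thompsonRels₂_map_eq_one_iff (f : FreeGroup (Fin 2) →* G) :
    (∀ r ∈ thompsonRels₂, f r = 1) ↔ IsThompsonSequence (thompsonSeq (f a) (f b)) := by
  rw [isThompsonSequence_iff fun _ => rfl]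
  simp only [thompsonRels₂, Set.forall_mem_insert, Set.mem_singleton_iff, forall_eq, cnj, map_mul,
    map_inv, mul_inv_eq_one, thompsonSeq]
  exact and_congr eq_comm eq_comm

theorem isThompsonSequence_x : IsThompsonSequence x :=
  (forall_mem_thompsonRels_map_eq_one_iff (PresentedGroup.mk thompsonRels)).1
    fun _ => PresentedGroup.one_of_mem

theorem isThompsonSequence_thompsonSeq_of :
    IsThompsonSequence (G := PresentedGroup thompsonRels₂)
      (thompsonSeq (PresentedGroup.of 0) (PresentedGroup.of 1)) :=
  (forall_mem_thompsonRels₂_map_eq_one_iff (PresentedGroup.mk thompsonRels₂)).1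
    fun _ => PresentedGroup.one_of_mem

theorem thompsonSeq_x : thompsonSeq (x 0) (x 1) = x :=
  thompsonSeq_eq fun n => isThompsonSequence_x n.succ_pos

theorem ThompsonF.hom_ext {f g : ThompsonF →* G} (h₀ : f (x 0) = g (x 0))
    (h₁ : f (x 1) = g (x 1)) : f = g := by
  refine PresentedGroup.ext fun n => ?_
  change f (x n) = g (x n)
  induction n using Nat.twoStepInduction with
  | zero => exact h₀
  | one => exact h₁
  | more n _ ih =>
    rw [← isThompsonSequence_x n.succ_pos]
    simp only [map_mul, map_inv, h₀, ih]

end Presentations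

/-- Thompson's group `F` admits the finite presentation with two generators `a, b` and the
two relations `b^{a·a} = b^{a·b}`, `b^{a·a·a} = b^{a·a·b}`, via an isomorphism sending
`a ↦ x₀` and `b ↦ x₁`. -/
theorem thompsonF_two_generator_two_relation_presentation :
    ∃ e : PresentedGroup thompsonRels₂ ≃* ThompsonF,
      e (PresentedGroup.of 0) = x 0 ∧ e (PresentedGroup.of 1) = x 1 := by
  let y : ℕ → PresentedGroup thompsonRels₂ :=
    thompsonSeq (PresentedGroup.of 0) (PresentedGroup.of 1)
  have hx : ∀ r ∈ thompsonRels₂, FreeGroup.lift ![x 0, x 1] r = 1 := by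
    rw [forall_mem_thompsonRels₂_map_eq_one_iff]
    simpa [a, b, thompsonSeq_x] using isThompsonSequence_x
  have hy : ∀ r ∈ thompsonRels, FreeGroup.lift y r = 1 := by
    simpa [forall_mem_thompsonRels_map_eq_one_iff] using isThompsonSequence_thompsonSeq_of
  let φ : PresentedGroup thompsonRels₂ →* ThompsonF := PresentedGroup.toGroup hx
  let ψ : ThompsonF →* PresentedGroup thompsonRels₂ := PresentedGroup.toGroup hy
  have hφ₀ : φ (PresentedGroup.of 0) = x 0 := PresentedGroup.toGroup.of hx
  have hφ₁ : φ (PresentedGroup.of 1) = x 1 := PresentedGroup.toGroup.of hx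
  have hψ (n : ℕ) : ψ (x n) = y n := PresentedGroup.toGroup.of hy
  have hψφ : ψ.comp φ = MonoidHom.id _ := PresentedGroup.ext <| by
    simp [Fin.forall_fin_two, hφ₀, hφ₁, hψ, y, thompsonSeq]
  have hφψ : φ.comp ψ = MonoidHom.id _ := ThompsonF.hom_ext
    (by simp [hψ, y, thompsonSeq, hφ₀]) (by simp [hψ, y, thompsonSeq, hφ₁])
  exact ⟨φ.toMulEquiv ψ hψφ hφψ, hφ₀, hφ₁⟩
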